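/- Let n ≥ 2 be an integer and f₁ ∈ ℝ. There exists a function f : ℝ → ℝ which is continuously differentiable on [0, +∞) and twice differentiable at every s > 0, with f(0) = f₁ and f'(0) = 0, such that f'(s) ∈ (−1, 1) for every s ≥ 0, and f''(s) = (1 − f'(s)²)·(1 − (n−1)·(cosh(s)/sinh(s))·f'(s)) for every s > 0. -/

import Mathlib

/-!
Write `f' = tanh ∘ w`. This builds in `|f'| < 1` and turns the equation into
`w' = 1 - (n - 1) coth s tanh w`; with `y = sinh s` and `W y = w s` it becomes
`W' = g - (m / y) tanh W`, where `m = n - 1` and `g y = 1 / √(1 + y²)`.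

Split `m tanh W = m W - h W` with `h W = m (W - tanh W)`. Variation of constants against the linear
part `W' + (m / y) W` shows that `v y = W y / y` must satisfy
`v y = ∫₀¹ tᵐ (g (y t) + h (y t v (y t)) / (y t)) dt`. Since `h` is `m`-Lipschitz and `∫₀¹ tᵐ dt`
equals `1 / (m + 1)`, the right-hand side contracts the sup norm on all of `ℝ` by the factor
`m / (m + 1) < 1`, so a global solution comes from a single fixed point.
-/

open Set NNReal BoundedContinuousFunction

section Hardy

variable {E : Type*} [NormedAddCommGroup E] [NormedSpace ℝ E] (m : ℝ≥0)

lemma continuous_uncurry_rpow_smul_comp_mul {φ : ℝ → E} (hφ : Continuous φ) :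
    Continuous (Function.uncurry fun y t : ℝ => t ^ (m : ℝ) • φ (y * t)) :=
  (continuous_snd.rpow_const fun _ => .inr m.2).smul (hφ.comp (continuous_fst.mul continuous_snd))

lemma intervalIntegrable_rpow_smul_comp_mul {φ : ℝ → E} (hφ : Continuous φ) (y a b : ℝ) :
    IntervalIntegrable (fun t : ℝ => t ^ (m : ℝ) • φ (y * t)) MeasureTheory.volume a b :=
  ((continuous_uncurry_rpow_smul_comp_mul m hφ).comp (.prodMk_right y)).intervalIntegrable a b

lemma norm_integral_rpow_smul_comp_mul_le (φ : ℝ →ᵇ E) (y : ℝ) :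
    ‖∫ t in (0 : ℝ)..1, t ^ (m : ℝ) • φ (y * t)‖ ≤ (m + 1 : ℝ)⁻¹ * ‖φ‖ := by
  have hm : (-1 : ℝ) < m := by linarith [m.2]
  calc ‖∫ t in (0 : ℝ)..1, t ^ (m : ℝ) • φ (y * t)‖
      ≤ ∫ t in (0 : ℝ)..1, t ^ (m : ℝ) * ‖φ‖ := by
        refine intervalIntegral.norm_integral_le_of_norm_le zero_le_one (.of_forall fun t ht => ?_)
          ((intervalIntegral.intervalIntegrable_rpow' hm).mul_const _)
        have h0 : 0 ≤ t ^ (m : ℝ) := Real.rpow_nonneg ht.1.le _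
        rw [norm_smul, Real.norm_of_nonneg h0]
        gcongr
        exact φ.norm_coe_le_norm _
    _ = (m + 1 : ℝ)⁻¹ * ‖φ‖ := by
        rw [intervalIntegral.integral_mul_const, integral_rpow (.inl hm), Real.one_rpow,
          Real.zero_rpow (by linarith), sub_zero, one_div]

/-- The weighted Hardy operator `φ ↦ (y ↦ ∫₀¹ tᵐ φ(yt) dt)`, which for `y > 0` is
`y⁻ᵐ⁻¹ ∫₀ʸ xᵐ φ(x) dx`. It inverts the singular operator `v ↦ y v' + (m + 1) v`; writing it with
the dilations `φ(yt)` makes its values continuous at `y = 0`. -/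
noncomputable def hardyOperator : (ℝ →ᵇ E) →L[ℝ] (ℝ →ᵇ E) :=
  LinearMap.mkContinuous
    { toFun φ := .ofNormedAddCommGroup (fun y => ∫ t in (0 : ℝ)..1, t ^ (m : ℝ) • φ (y * t))
        (intervalIntegral.continuous_parametric_intervalIntegral_of_continuous'
          (continuous_uncurry_rpow_smul_comp_mul m φ.continuous) 0 1)
        _ (norm_integral_rpow_smul_comp_mul_le m φ)
      map_add' φ ψ := by
        ext y
        simp only [coe_ofNormedAddCommGroup, BoundedContinuousFunction.coe_add, Pi.add_apply,
          smul_add]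
        exact intervalIntegral.integral_add
          (intervalIntegrable_rpow_smul_comp_mul m φ.continuous ..)
          (intervalIntegrable_rpow_smul_comp_mul m ψ.continuous ..)
      map_smul' c φ := by
        ext y
        simp only [coe_ofNormedAddCommGroup, BoundedContinuousFunction.coe_smul, RingHom.id_apply,
          smul_comm _ c]
        exact intervalIntegral.integral_smul c _ }
    (m + 1 : ℝ)⁻¹
    fun φ => norm_ofNormedAddCommGroup_le _ (by positivity)
      (norm_integral_rpow_smul_comp_mul_le m φ)

lemma hardyOperator_apply (φ : ℝ →ᵇ E) (y : ℝ) :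
    hardyOperator m φ y = ∫ t in (0 : ℝ)..1, t ^ (m : ℝ) • φ (y * t) :=
  rfl

lemma lipschitzWith_hardyOperator :
    LipschitzWith (m + 1)⁻¹ (hardyOperator m : (ℝ →ᵇ E) →L[ℝ] (ℝ →ᵇ E)) := by
  have hnorm : ‖(hardyOperator m : (ℝ →ᵇ E) →L[ℝ] (ℝ →ᵇ E))‖ ≤ (m + 1 : ℝ)⁻¹ :=
    LinearMap.mkContinuous_norm_le _ (by positivity) _
  refine (ContinuousLinearMap.lipschitz _).weaken (NNReal.coe_le_coe.1 ?_)
  simpa using hnorm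

lemma hardyOperator_eq_rpow_smul_integral (φ : ℝ →ᵇ E) {y : ℝ} (hy : 0 < y) :
    hardyOperator m φ y = y ^ (-(m + 1) : ℝ) • ∫ x in (0 : ℝ)..y, x ^ (m : ℝ) • φ x := by
  have hsubst : ∫ x in (0 : ℝ)..y, x ^ (m : ℝ) • φ x =
      y • ∫ t in (0 : ℝ)..1, (y * t) ^ (m : ℝ) • φ (y * t) := by
    simpa using (intervalIntegral.smul_integral_comp_mul_left (a := 0) (b := 1)
      (fun x => x ^ (m : ℝ) • φ x) y).symm
  have hscale : ∫ t in (0 : ℝ)..1, (y * t) ^ (m : ℝ) • φ (y * t) =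
      y ^ (m : ℝ) • hardyOperator m φ y := by
    rw [hardyOperator_apply, ← intervalIntegral.integral_smul]
    refine intervalIntegral.integral_congr fun t ht => ?_
    rw [uIcc_of_le zero_le_one] at ht
    simp only [Real.mul_rpow hy.le ht.1, mul_smul]
  have hpow : y ^ (-(m + 1) : ℝ) * (y * y ^ (m : ℝ)) = 1 := by
    rw [mul_comm y, ← Real.rpow_add_one hy.ne', ← Real.rpow_add hy, neg_add_cancel, Real.rpow_zero]
  rw [hsubst, hscale, smul_smul, smul_smul, mul_assoc, hpow, one_smul]

lemma hasDerivAt_hardyOperator [CompleteSpace E] (φ : ℝ →ᵇ E) {y : ℝ} (hy : 0 < y) :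
    HasDerivAt (hardyOperator m φ) (y⁻¹ • (φ y - (m + 1 : ℝ) • hardyOperator m φ y)) y := by
  have hint : HasDerivAt (fun y => ∫ x in (0 : ℝ)..y, x ^ (m : ℝ) • φ x) (y ^ (m : ℝ) • φ y) y :=
    (((Real.continuous_rpow_const m.2).smul φ.continuous).integral_hasStrictDerivAt 0 y).hasDerivAt
  have hprod := (Real.hasDerivAt_rpow_const (p := -(m + 1)) (.inl hy.ne')).smul hint
  refine (hprod.congr_of_eventuallyEq ?_).congr_deriv ?_
  · filter_upwards [lt_mem_nhds hy] with z hz using hardyOperator_eq_rpow_smul_integral m φ hz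
  · have hleft : y ^ (-(m + 1) : ℝ) * y ^ (m : ℝ) = y⁻¹ := by
      rw [← Real.rpow_add hy, ← Real.rpow_neg_one]
      ring_nf
    have hright : y ^ (-(m + 1) - 1 : ℝ) = y⁻¹ * y ^ (-(m + 1) : ℝ) := by
      rw [Real.rpow_sub_one hy.ne', div_eq_inv_mul]
    rw [hardyOperator_eq_rpow_smul_integral m φ hy, hright]
    simp only [smul_smul, smul_sub, hleft]
    module

end Hardy

section Dilate

variable {h : ℝ → ℝ} {K : ℝ≥0}

/-- The dilation `b ↦ (h (a b) - h 0) / a` of a function `h`, extended to `a = 0` by its limit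
`h'(0) b`. -/
noncomputable def dilate (h : ℝ → ℝ) (a b : ℝ) : ℝ :=
  b * dslope h 0 (a * b)

lemma mul_dilate (h : ℝ → ℝ) (a b : ℝ) : a * dilate h a b = h (a * b) - h 0 := by
  rw [dilate, ← mul_assoc]
  simpa using sub_smul_dslope h 0 (a * b)

lemma dilate_zero_left (h : ℝ → ℝ) (b : ℝ) : dilate h 0 b = b * deriv h 0 := by
  simp [dilate]

lemma dilate_zero_right (h : ℝ → ℝ) (a : ℝ) : dilate h a 0 = 0 := by
  simp [dilate]

lemma lipschitzWith_dilate (hK : LipschitzWith K h) (a : ℝ) : LipschitzWith K (dilate h a) := by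
  refine .of_dist_le_mul fun b c => ?_
  rcases eq_or_ne a 0 with rfl | ha
  · rw [dilate_zero_left, dilate_zero_left, Real.dist_eq, ← sub_mul, abs_mul, mul_comm]
    exact mul_le_mul_of_nonneg_right (norm_deriv_le_of_lipschitz hK) (abs_nonneg _)
  · have hdist := hK.dist_le_mul (a * b) (a * c)
    rw [Real.dist_eq, Real.dist_eq, ← mul_sub, abs_mul,
      ← sub_sub_sub_cancel_right (h (a * b)) _ (h 0), ← mul_dilate, ← mul_dilate, ← mul_sub,
      abs_mul, mul_left_comm] at hdist
    exact le_of_mul_le_mul_left hdist (abs_pos.2 ha)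

lemma continuous_dilate (hc : Continuous h) (hd : DifferentiableAt ℝ h 0) :
    Continuous fun p : ℝ × ℝ => dilate h p.1 p.2 := by
  have hslope : Continuous (dslope h 0) :=
    continuousOn_univ.1 ((continuousOn_dslope Filter.univ_mem).2 ⟨hc.continuousOn, hd⟩)
  unfold dilate
  fun_prop

/-- The superposition (Nemytskii) operator `v ↦ (x ↦ (h (x v(x)) - h 0) / x)`, with the value at
`x = 0` filled in by continuity. -/
noncomputable def dilateComp (hK : LipschitzWith K h) (hd : DifferentiableAt ℝ h 0)
    (v : ℝ →ᵇ ℝ) : ℝ →ᵇ ℝ :=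
  .ofNormedAddCommGroup (fun x => dilate h x (v x))
    ((continuous_dilate hK.continuous hd).comp (continuous_id.prodMk v.continuous))
    (K * ‖v‖) fun x => by
      have hdist := (lipschitzWith_dilate hK x).dist_le_mul (v x) 0
      rw [dilate_zero_right, dist_zero_right, dist_zero_right] at hdist
      exact hdist.trans (by gcongr; exact v.norm_coe_le_norm x)

lemma dilateComp_apply (hK : LipschitzWith K h) (hd : DifferentiableAt ℝ h 0) (v : ℝ →ᵇ ℝ)
    (x : ℝ) : dilateComp hK hd v x = dilate h x (v x) :=
  rfl

lemma lipschitzWith_dilateComp (hK : LipschitzWith K h) (hd : DifferentiableAt ℝ h 0) :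
    LipschitzWith K (dilateComp hK hd) :=
  .of_dist_le_mul fun v w => (dist_le (by positivity)).2 fun x =>
    ((lipschitzWith_dilate hK x).dist_le_mul _ _).trans <| by
      gcongr
      exact dist_coe_le_dist x

end Dilate

section SingularEquation

variable {h : ℝ → ℝ} {m K : ℝ≥0}

lemma exists_hardyOperator_fixedPoint (hKm : K < m + 1) (hK : LipschitzWith K h)
    (hd : DifferentiableAt ℝ h 0) (g : ℝ →ᵇ ℝ) :
    ∃ v : ℝ →ᵇ ℝ, hardyOperator m (g + dilateComp hK hd v) = v := by
  have hcontr : ContractingWith ((m + 1)⁻¹ * K)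
      fun v => hardyOperator m (g + dilateComp hK hd v) := by
    refine ⟨?_, (lipschitzWith_hardyOperator m).comp ?_⟩
    · rwa [inv_mul_lt_one₀ (by positivity)]
    · exact .of_dist_le_mul fun v w => by
        simpa only [dist_add_left] using (lipschitzWith_dilateComp hK hd).dist_le_mul v w
  exact ⟨_, hcontr.fixedPoint_isFixedPt⟩

theorem exists_hasDerivAt_singular (hKm : K < m + 1) (hK : LipschitzWith K h)
    (hd : DifferentiableAt ℝ h 0) (h0 : h 0 = 0) (g : ℝ →ᵇ ℝ) :
    ∃ W : ℝ → ℝ, Continuous W ∧ W 0 = 0 ∧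
      ∀ y, 0 < y → HasDerivAt W (g y + (h (W y) - m * W y) / y) y := by
  obtain ⟨v, hv⟩ := exists_hardyOperator_fixedPoint hKm hK hd g
  refine ⟨fun y => y * v y, continuous_id.mul v.continuous, zero_mul _, fun y hy => ?_⟩
  have hderiv := hasDerivAt_hardyOperator m (g + dilateComp hK hd v) hy
  rw [hv] at hderiv
  refine ((hasDerivAt_id' y).mul hderiv).congr_deriv ?_
  have hdil : h (y * v y) = y * dilate h y (v y) := by rw [mul_dilate, h0, sub_zero]
  simp only [BoundedContinuousFunction.coe_add, Pi.add_apply, dilateComp_apply, smul_eq_mul, hdil]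
  field_simp
  ring

end SingularEquation

lemma hasDerivAt_tanh (x : ℝ) : HasDerivAt Real.tanh (1 - Real.tanh x ^ 2) x := by
  have hc : Real.cosh x ≠ 0 := (Real.cosh_pos x).ne'
  have hquot := (Real.hasDerivAt_sinh x).div (Real.hasDerivAt_cosh x) hc
  refine (hquot.congr_of_eventuallyEq ?_).congr_deriv ?_
  · exact .of_forall Real.tanh_eq_sinh_div_cosh
  · rw [Real.tanh_eq_sinh_div_cosh]
    field_simp

lemma continuous_tanh : Continuous Real.tanh :=
  continuous_iff_continuousAt.2 fun x => (hasDerivAt_tanh x).continuousAt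

lemma tanh_mem_Ioo (x : ℝ) : Real.tanh x ∈ Ioo (-1 : ℝ) 1 :=
  Real.tanh_bijOn.mapsTo (mem_univ x)

lemma hasDerivAt_id_sub_tanh (x : ℝ) :
    HasDerivAt (fun x => x - Real.tanh x) (Real.tanh x ^ 2) x :=
  ((hasDerivAt_id' x).sub (hasDerivAt_tanh x)).congr_deriv (sub_sub_cancel _ _)

lemma lipschitzWith_id_sub_tanh : LipschitzWith 1 fun x : ℝ => x - Real.tanh x := by
  refine lipschitzWith_of_nnnorm_deriv_le
    (fun x => (hasDerivAt_id_sub_tanh x).differentiableAt) fun x => ?_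
  rw [(hasDerivAt_id_sub_tanh x).deriv, ← NNReal.coe_le_coe, coe_nnnorm, Real.norm_of_nonneg
    (sq_nonneg _), NNReal.coe_one, sq_le_one_iff_abs_le_one, abs_le]
  exact Ioo_subset_Icc_self (tanh_mem_Ioo x)

/-- The derivative `1 / √(1 + y²)` of `arsinh`, which is the forcing term of the soliton equation
in the variable `y = sinh s`. -/
noncomputable def arsinhDeriv : ℝ →ᵇ ℝ :=
  .ofNormedAddCommGroup (fun y => (√(1 + y ^ 2))⁻¹)
    (Continuous.inv₀ (by fun_prop) fun y => (Real.sqrt_pos.2 (by positivity)).ne') 1 fun y => by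
      rw [Real.norm_of_nonneg (by positivity)]
      exact inv_le_one_of_one_le₀ (Real.one_le_sqrt.2 (le_add_of_nonneg_right (sq_nonneg y)))

lemma arsinhDeriv_sinh (s : ℝ) : arsinhDeriv (Real.sinh s) = (Real.cosh s)⁻¹ := by
  change (√(1 + Real.sinh s ^ 2))⁻¹ = _
  rw [← Real.cosh_sq', Real.sqrt_sq (Real.cosh_pos s).le]

lemma exists_hasDerivAt_arsinhDeriv_sub_tanh (m : ℝ≥0) :
    ∃ W : ℝ → ℝ, Continuous W ∧ W 0 = 0 ∧
      ∀ y, 0 < y → HasDerivAt W (arsinhDeriv y - m * Real.tanh (W y) / y) y := by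
  have hlip : LipschitzWith m fun x : ℝ => (m : ℝ) * (x - Real.tanh x) := by
    simpa [Function.comp_def] using (lipschitzWith_smul (m : ℝ)).comp lipschitzWith_id_sub_tanh
  obtain ⟨W, hWc, hW0, hW⟩ := exists_hasDerivAt_singular (lt_add_one m) hlip
    ((hasDerivAt_id_sub_tanh 0).const_mul _).differentiableAt (by simp) arsinhDeriv
  exact ⟨W, hWc, hW0, fun y hy => (hW y hy).congr_deriv (by ring)⟩

lemma exists_soliton_slope (m : ℝ≥0) :
    ∃ u : ℝ → ℝ, Continuous u ∧ u 0 = 0 ∧ (∀ s, u s ∈ Ioo (-1 : ℝ) 1) ∧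
      ∀ s, 0 < s → HasDerivAt u
        ((1 - u s ^ 2) * (1 - m * (Real.cosh s / Real.sinh s) * u s)) s := by
  obtain ⟨W, hWc, hW0, hW⟩ := exists_hasDerivAt_arsinhDeriv_sub_tanh m
  refine ⟨fun s => Real.tanh (W (Real.sinh s)),
    continuous_tanh.comp (hWc.comp Real.continuous_sinh), by simp [hW0],
    fun s => tanh_mem_Ioo _, fun s hs => ?_⟩
  have hW_sinh := (hW _ (Real.sinh_pos_iff.2 hs)).comp s (Real.hasDerivAt_sinh s)
  refine ((hasDerivAt_tanh _).comp s hW_sinh).congr_deriv ?_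
  have hc : Real.cosh s ≠ 0 := (Real.cosh_pos s).ne'
  rw [arsinhDeriv_sinh, Function.comp_apply]
  field_simp

lemma exists_contDiff_one_deriv_eq {E : Type*} [NormedAddCommGroup E] [NormedSpace ℝ E]
    [CompleteSpace E] {u : ℝ → E} (hu : Continuous u) (a : ℝ) (c : E) :
    ∃ f : ℝ → E, ContDiff ℝ 1 f ∧ f a = c ∧ deriv f = u := by
  have hf (s : ℝ) : HasDerivAt (fun s => c + ∫ x in a..s, u x) (u s) s :=
    (hu.integral_hasStrictDerivAt a s).hasDerivAt.const_add c
  have hderiv : deriv (fun s => c + ∫ x in a..s, u x) = u := funext fun s => (hf s).deriv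
  exact ⟨_, contDiff_one_iff_deriv.2 ⟨fun s => (hf s).differentiableAt, by rwa [hderiv]⟩, by simp,
    hderiv⟩

theorem stmt_8_general (m : ℝ) (hm : 0 ≤ m) (f₁ : ℝ) :
    ∃ f : ℝ → ℝ,
      ContDiffOn ℝ 1 f (Ici 0) ∧
      (∀ s : ℝ, 0 < s → DifferentiableAt ℝ (derivWithin f (Ici 0)) s) ∧
      f 0 = f₁ ∧ derivWithin f (Ici 0) 0 = 0 ∧
      (∀ s ∈ Ici (0 : ℝ), derivWithin f (Ici 0) s ∈ Ioo (-1 : ℝ) 1) ∧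
      ∀ s : ℝ, 0 < s →
        deriv (derivWithin f (Ici 0)) s =
          (1 - (derivWithin f (Ici 0) s) ^ 2) *
            (1 - m * (Real.cosh s / Real.sinh s) * derivWithin f (Ici 0) s) := by
  lift m to ℝ≥0 using hm
  obtain ⟨u, huc, hu0, hu_mem, hu⟩ := exists_soliton_slope m
  obtain ⟨f, hf, hf0, rfl⟩ := exists_contDiff_one_deriv_eq huc 0 f₁
  have heqOn : EqOn (derivWithin f (Ici 0)) (deriv f) (Ici 0) := fun s hs =>
    (hf.differentiable one_ne_zero s).derivWithin (uniqueDiffOn_Ici 0 s hs)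
  have hderiv {s : ℝ} (hs : 0 < s) := (hu s hs).congr_of_eventuallyEq
    (heqOn.eventuallyEq_of_mem (Ici_mem_nhds hs))
  refine ⟨f, hf.contDiffOn, fun s hs => (hderiv hs).differentiableAt, hf0,
    (heqOn self_mem_Ici).trans hu0, fun s hs => heqOn hs ▸ hu_mem s, fun s hs => ?_⟩
  rw [heqOn hs.le, (hderiv hs).deriv]

/-- Global existence of rotationally symmetric spacelike graphical translating solitons
in the Lorentzian product ℍⁿ × ℝ. -/
theorem stmt_8 (n : ℕ) (hn : 2 ≤ n) (f₁ : ℝ) :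
    ∃ f : ℝ → ℝ,
      ContDiffOn ℝ 1 f (Set.Ici 0) ∧
      (∀ s : ℝ, 0 < s → DifferentiableAt ℝ (derivWithin f (Set.Ici 0)) s) ∧
      f 0 = f₁ ∧ derivWithin f (Set.Ici 0) 0 = 0 ∧
      (∀ s ∈ Set.Ici (0 : ℝ), derivWithin f (Set.Ici 0) s ∈ Set.Ioo (-1 : ℝ) 1) ∧
      ∀ s : ℝ, 0 < s →
        deriv (derivWithin f (Set.Ici 0)) s =
          (1 - (derivWithin f (Set.Ici 0) s) ^ 2) *
            (1 - ((n : ℝ) - 1) * (Real.cosh s / Real.sinh s) *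
              derivWithin f (Set.Ici 0) s) := by
  exact stmt_8_general (n - 1) (sub_nonneg.2 (mod_cast one_le_two.trans hn)) f₁
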